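/- arXiv:math/9607202 — 4 statements merged into one kernel-verified Lean document; each statement's English description precedes it below -/
import Mathlib

section
/- Let T be a densely defined closed operator from H₁ to H₂ and S a densely defined closed operator from H₂ to H₃. Assume range T = ker S (as subspaces of H₂) and that range S is closed in H₃. Then there is a constant c > 0 such that for every f ∈ H₂ there exists a unique u ∈ H₂ satisfying: u ∈ dom T*, T*u ∈ dom T, u ∈ dom S, Su ∈ dom S*, T(T*u) + S*(Su) = f, and moreover ‖u‖ ≤ c‖f‖. -/
/-- `u` solves the abstract `(∂̄,s)`-Neumann problem for the pair of operators `T`, `S`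
with data `f`:  `u ∈ dom T*`, `T* u ∈ dom T`, `u ∈ dom S`, `S u ∈ dom S*`, and
`T (T* u) + S* (S u) = f`. -/
def SolvesNeumannProblem
    {H₁ H₂ H₃ : Type*}
    [NormedAddCommGroup H₁] [InnerProductSpace ℂ H₁] [CompleteSpace H₁]
    [NormedAddCommGroup H₂] [InnerProductSpace ℂ H₂] [CompleteSpace H₂]
    [NormedAddCommGroup H₃] [InnerProductSpace ℂ H₃] [CompleteSpace H₃]
    (T : H₁ →ₗ.[ℂ] H₂) (S : H₂ →ₗ.[ℂ] H₃) (f u : H₂) : Prop :=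
  ∃ (h₁ : u ∈ T.adjoint.domain) (h₂ : T.adjoint ⟨u, h₁⟩ ∈ T.domain)
    (h₃ : u ∈ S.domain) (h₄ : S ⟨u, h₃⟩ ∈ S.adjoint.domain),
    T ⟨T.adjoint ⟨u, h₁⟩, h₂⟩ + S.adjoint ⟨S ⟨u, h₃⟩, h₄⟩ = f

/-!
Split `f = p + q` with `p ∈ range T = ker S` and `q ∈ (ker S)ᗮ`. By the closed range theorem,
`(ker A)ᗮ ⊆ range A†` whenever `A` has closed range; applied to `A = T` it solves `T T† u₁ = p`
inside `range T`, applied to `A = S` it solves `S† S u₂ = q` inside `(ker S)ᗮ ⊆ ker T†`, and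
`u = u₁ + u₂` is a solution. Uniqueness and the norm bound then come for free: the relation
`T T† u + S† S u = f` between `u` and `f` is symmetric, and by Hellinger–Toeplitz a symmetric
relation that hits every `f` has the form `u = N f` with `N` a bounded operator.
-/

open scoped InnerProductSpace LinearPMap

section UnboundedOperators

variable {𝕜 E F : Type*} [RCLike 𝕜]
  [NormedAddCommGroup E] [InnerProductSpace 𝕜 E]
  [NormedAddCommGroup F] [InnerProductSpace 𝕜 F]

/-- The kernel of a partially defined operator, as a submodule of the ambient space rather than
of the domain, so that it can be compared with the range of another operator. -/
def ambientKer (A : E →ₗ.[𝕜] F) : Submodule 𝕜 E :=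
  (LinearMap.ker A.toFun).map A.domain.subtype

theorem mem_ambientKer_iff {A : E →ₗ.[𝕜] F} {x : E} :
    x ∈ ambientKer A ↔ (x, (0 : F)) ∈ A.graph := by
  simp [ambientKer, LinearPMap.mem_graph_iff, and_comm]

theorem mem_range_toFun_iff {A : E →ₗ.[𝕜] F} {y : F} :
    y ∈ LinearMap.range A.toFun ↔ ∃ x, (x, y) ∈ A.graph := by
  simp [← A.graph_map_snd_eq_range]

theorem isClosed_ambientKer {A : E →ₗ.[𝕜] F} (hA : A.IsClosed) :
    IsClosed (ambientKer A : Set E) := by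
  have : (ambientKer A : Set E) = (fun x ↦ (x, (0 : F))) ⁻¹' A.graph :=
    Set.ext fun _ ↦ mem_ambientKer_iff
  exact this ▸ hA.preimage (by fun_prop)

variable [CompleteSpace E]

theorem exists_mem_ambientKer_orthogonal_mem_graph {A : E →ₗ.[𝕜] F} (hA : A.IsClosed) {y : F}
    (hy : y ∈ LinearMap.range A.toFun) : ∃ x ∈ (ambientKer A)ᗮ, (x, y) ∈ A.graph := by
  have : CompleteSpace (ambientKer A) := (isClosed_ambientKer hA).completeSpace_coe
  obtain ⟨x, hxy⟩ := mem_range_toFun_iff.1 hy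
  refine ⟨x - (ambientKer A).starProjection x,
    (ambientKer A).sub_starProjection_mem_orthogonal x, ?_⟩
  have hker := mem_ambientKer_iff.1 ((ambientKer A).starProjection_apply_mem x)
  simpa using A.graph.sub_mem hxy hker

theorem exists_norm_le_of_isComplete_range {A : E →ₗ.[𝕜] F} (hA : A.IsClosed)
    (hR : IsComplete (LinearMap.range A.toFun : Set F)) :
    ∃ C, ∀ y ∈ LinearMap.range A.toFun, ∃ x, (x, y) ∈ A.graph ∧ ‖x‖ ≤ C * ‖y‖ := by
  let R := LinearMap.range A.toFun
  have : CompleteSpace R := hR.completeSpace_coe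
  -- The graph is cut down to `E × R` because `F` itself need not be complete.
  let G : Submodule 𝕜 (E × R) := A.graph.comap (LinearMap.id.prodMap R.subtype)
  have hG : IsClosed (G : Set (E × R)) :=
    hA.preimage (f := fun z : E × R ↦ (z.1, (z.2 : F))) (by fun_prop)
  have : CompleteSpace G := hG.completeSpace_coe
  let π : G →L[𝕜] R := (ContinuousLinearMap.snd 𝕜 E R).comp G.subtypeL
  have hπ : Function.Surjective π := fun y ↦
    let ⟨x, hx⟩ := mem_range_toFun_iff.1 y.2
    ⟨⟨(x, y), hx⟩, rfl⟩
  obtain ⟨C, -, hC⟩ := π.exists_preimage_norm_le hπ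
  refine ⟨C, fun y hy ↦ ?_⟩
  obtain ⟨⟨⟨x, z⟩, hxz⟩, rfl : z = ⟨y, hy⟩, hle⟩ := hC ⟨y, hy⟩
  exact ⟨x, hxz, (norm_fst_le _).trans hle⟩

theorem mem_adjoint_graph_iff {A : E →ₗ.[𝕜] F} (hd : Dense (A.domain : Set E)) {y : F} {x : E} :
    (y, x) ∈ A†.graph ↔ ∀ a b, (a, b) ∈ A.graph → ⟪b, y⟫_𝕜 = ⟪a, x⟫_𝕜 := by
  simp only [LinearPMap.adjoint_graph_eq_graph_adjoint hd, Submodule.mem_adjoint_iff, sub_eq_zero]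

theorem mem_adjoint_graph_zero_of_mem_range_orthogonal {A : E →ₗ.[𝕜] F}
    (hd : Dense (A.domain : Set E)) {y : F} (hy : y ∈ (LinearMap.range A.toFun)ᗮ) :
    (y, 0) ∈ A†.graph := by
  refine (mem_adjoint_graph_iff hd).2 fun a b hab ↦ ?_
  rw [inner_zero_right]
  exact hy b (mem_range_toFun_iff.2 ⟨a, hab⟩)

theorem exists_mem_range_mem_adjoint_graph {A : E →ₗ.[𝕜] F} (hd : Dense (A.domain : Set E))
    (hA : A.IsClosed) (hR : IsComplete (LinearMap.range A.toFun : Set F)) {x : E}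
    (hx : x ∈ (ambientKer A)ᗮ) : ∃ y ∈ LinearMap.range A.toFun, (y, x) ∈ A†.graph := by
  let R := LinearMap.range A.toFun
  have : CompleteSpace R := hR.completeSpace_coe
  have inner_eq_of_mem_graph {a a' : E} {b : F} (ha : (a, b) ∈ A.graph)
      (ha' : (a', b) ∈ A.graph) : ⟪x, a⟫_𝕜 = ⟪x, a'⟫_𝕜 := by
    have hker : a - a' ∈ ambientKer A :=
      mem_ambientKer_iff.2 (by simpa using A.graph.sub_mem ha ha')
    rw [← sub_eq_zero, ← inner_sub_right, Submodule.inner_left_of_mem_orthogonal hker hx]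
  -- `y` is the Riesz representative of the functional `A a ↦ ⟪x, a⟫` on the range of `A`.
  obtain ⟨s, hs⟩ := A.toFun.rangeRestrict.exists_rightInverse_of_surjective
    A.toFun.range_rangeRestrict
  have s_mem_graph (b : R) : ((s b : E), (b : F)) ∈ A.graph :=
    A.mem_graph_iff.2 ⟨s b, rfl, congrArg Subtype.val (LinearMap.congr_fun hs b)⟩
  obtain ⟨C, hC⟩ := exists_norm_le_of_isComplete_range hA hR
  let φ : StrongDual 𝕜 R :=
    (innerₛₗ 𝕜 x ∘ₗ A.domain.subtype ∘ₗ s).mkContinuous (‖x‖ * C) fun b ↦ by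
      obtain ⟨a, hab, hle⟩ := hC b b.2
      calc ‖⟪x, (s b : E)⟫_𝕜‖ = ‖⟪x, a⟫_𝕜‖ := by rw [inner_eq_of_mem_graph (s_mem_graph b) hab]
        _ ≤ ‖x‖ * ‖a‖ := norm_inner_le_norm x a
        _ ≤ ‖x‖ * C * ‖b‖ := by rw [mul_assoc]; gcongr; exact hle
  let y : R := (InnerProductSpace.toDual 𝕜 R).symm φ
  refine ⟨y, y.2, (mem_adjoint_graph_iff hd).2 fun a b hab ↦ ?_⟩
  let b' : R := ⟨b, mem_range_toFun_iff.2 ⟨a, hab⟩⟩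
  have hyb : ⟪(y : F), b⟫_𝕜 = ⟪x, a⟫_𝕜 := calc
    ⟪(y : F), b⟫_𝕜 = φ b' := InnerProductSpace.toDual_symm_apply (y := φ) (x := b')
    _ = ⟪x, a⟫_𝕜 := inner_eq_of_mem_graph (s_mem_graph b') hab
  rw [← inner_conj_symm, hyb, inner_conj_symm]

theorem exists_continuousLinearMap_of_symmetric_of_surjective {r : E → E → Prop}
    (hsymm : ∀ ⦃u f u' f'⦄, r u f → r u' f' → ⟪f, u'⟫_𝕜 = ⟪u, f'⟫_𝕜) (hsurj : ∀ f, ∃ u, r u f) :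
    ∃ N : E →L[𝕜] E, ∀ u f, r u f ↔ u = N f := by
  choose g hg using hsurj
  have inner_g (f f' : E) : ⟪g f, f'⟫_𝕜 = ⟪f, g f'⟫_𝕜 := (hsymm (hg f) (hg f')).symm
  let N : E →ₗ[𝕜] E :=
    { toFun := g
      map_add' := fun f f' ↦ ext_inner_right 𝕜 fun h ↦ by simp only [inner_g, inner_add_left]
      map_smul' := fun c f ↦ ext_inner_right 𝕜 fun h ↦ by
        simp only [inner_g, inner_smul_left, RingHom.id_apply] }
  have hN : N.IsSymmetric := inner_g
  refine ⟨⟨N, hN.continuous⟩, fun u f ↦ ⟨fun h ↦ ext_inner_right 𝕜 fun f' ↦ ?_, ?_⟩⟩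
  · exact (hsymm h (hg f')).symm.trans (inner_g f f').symm
  · rintro rfl
    exact hg f

end UnboundedOperators

section NeumannProblem

variable {𝕜 E F G : Type*} [RCLike 𝕜]
  [NormedAddCommGroup E] [InnerProductSpace 𝕜 E] [CompleteSpace E]
  [NormedAddCommGroup F] [InnerProductSpace 𝕜 F] [CompleteSpace F]
  [NormedAddCommGroup G] [InnerProductSpace 𝕜 G]
  {T : E →ₗ.[𝕜] F} {S : F →ₗ.[𝕜] G}

/-- The relation `T (T† u) + S† (S u) = f`, over any `RCLike` field. The intermediate vectors
`v = T† u`, `p = T v`, `w = S u`, `q = S† w` are named through graphs, so that no domain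
membership proof enters a term. -/
def IsNeumannSolution (T : E →ₗ.[𝕜] F) (S : F →ₗ.[𝕜] G) (u f : F) : Prop :=
  ∃ v p w q, (u, v) ∈ T†.graph ∧ (v, p) ∈ T.graph ∧ (u, w) ∈ S.graph ∧ (w, q) ∈ S†.graph ∧
    p + q = f

theorem inner_add_eq_dirichlet_form (hTd : Dense (T.domain : Set E))
    (hSd : Dense (S.domain : Set F)) {v v' : E} {p q u' : F} {w w' : G}
    (hvp : (v, p) ∈ T.graph) (hwq : (w, q) ∈ S†.graph)
    (huv' : (u', v') ∈ T†.graph) (huw' : (u', w') ∈ S.graph) :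
    ⟪p + q, u'⟫_𝕜 = ⟪v, v'⟫_𝕜 + ⟪w, w'⟫_𝕜 := by
  have hT : ⟪p, u'⟫_𝕜 = ⟪v, v'⟫_𝕜 := (mem_adjoint_graph_iff hTd).1 huv' v p hvp
  have hS : ⟪w', w⟫_𝕜 = ⟪u', q⟫_𝕜 := (mem_adjoint_graph_iff hSd).1 hwq u' w' huw'
  rw [inner_add_left, hT, ← inner_conj_symm q, ← hS, inner_conj_symm]

theorem IsNeumannSolution.inner_symm (hTd : Dense (T.domain : Set E))
    (hSd : Dense (S.domain : Set F)) {u f u' f' : F} (h : IsNeumannSolution T S u f)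
    (h' : IsNeumannSolution T S u' f') : ⟪f, u'⟫_𝕜 = ⟪u, f'⟫_𝕜 := by
  obtain ⟨v, p, w, q, huv, hvp, huw, hwq, rfl⟩ := h
  obtain ⟨v', p', w', q', huv', hvp', huw', hwq', rfl⟩ := h'
  rw [← inner_conj_symm u, inner_add_eq_dirichlet_form hTd hSd hvp hwq huv' huw',
    inner_add_eq_dirichlet_form hTd hSd hvp' hwq' huv huw, map_add, inner_conj_symm,
    inner_conj_symm]

theorem exists_isNeumannSolution (hTd : Dense (T.domain : Set E)) (hT : T.IsClosed)
    (hSd : Dense (S.domain : Set F)) (hS : S.IsClosed)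
    (hTS : LinearMap.range T.toFun = ambientKer S)
    (hR : IsComplete (LinearMap.range S.toFun : Set G)) (f : F) :
    ∃ u, IsNeumannSolution T S u f := by
  have hSker : IsComplete (ambientKer S : Set F) := (isClosed_ambientKer hS).isComplete
  have : CompleteSpace (ambientKer S) := hSker.completeSpace_coe
  obtain ⟨p, hp, q, hq, rfl⟩ := (ambientKer S).exists_add_mem_mem_orthogonal f
  obtain ⟨v, hv, hvp⟩ := exists_mem_ambientKer_orthogonal_mem_graph hT (hTS ▸ hp)
  obtain ⟨u₁, hu₁, hu₁v⟩ := exists_mem_range_mem_adjoint_graph hTd hT (hTS ▸ hSker) hv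
  obtain ⟨w, hw, hwq⟩ := exists_mem_range_mem_adjoint_graph hSd hS hR hq
  obtain ⟨u₂, hu₂, hu₂w⟩ := exists_mem_ambientKer_orthogonal_mem_graph hS hw
  have hSu₁ : (u₁, 0) ∈ S.graph := mem_ambientKer_iff.1 (hTS ▸ hu₁)
  have hTu₂ : (u₂, 0) ∈ T†.graph :=
    mem_adjoint_graph_zero_of_mem_range_orthogonal hTd (hTS ▸ hu₂)
  refine ⟨u₁ + u₂, v, p, w, q, ?_, hvp, ?_, hwq, rfl⟩
  · simpa using T†.graph.add_mem hu₁v hTu₂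
  · simpa using S.graph.add_mem hSu₁ hu₂w

theorem exists_unique_neumann_solution_general (hTd : Dense (T.domain : Set E)) (hT : T.IsClosed)
    (hSd : Dense (S.domain : Set F)) (hS : S.IsClosed)
    (hTS : LinearMap.range T.toFun = ambientKer S)
    (hR : IsComplete (LinearMap.range S.toFun : Set G)) :
    ∃ N : F →L[𝕜] F, ∀ u f, IsNeumannSolution T S u f ↔ u = N f :=
  exists_continuousLinearMap_of_symmetric_of_surjective
    (fun _ _ _ _ h h' ↦ h.inner_symm hTd hSd h')
    (exists_isNeumannSolution hTd hT hSd hS hTS hR)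

end NeumannProblem

theorem solvesNeumannProblem_iff {H₁ H₂ H₃ : Type*}
    [NormedAddCommGroup H₁] [InnerProductSpace ℂ H₁] [CompleteSpace H₁]
    [NormedAddCommGroup H₂] [InnerProductSpace ℂ H₂] [CompleteSpace H₂]
    [NormedAddCommGroup H₃] [InnerProductSpace ℂ H₃] [CompleteSpace H₃]
    {T : H₁ →ₗ.[ℂ] H₂} {S : H₂ →ₗ.[ℂ] H₃} {f u : H₂} :
    SolvesNeumannProblem T S f u ↔ IsNeumannSolution T S u f := by
  constructor
  · rintro ⟨h₁, h₂, h₃, h₄, h⟩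
    exact ⟨_, _, _, _, T†.mem_graph ⟨u, h₁⟩, T.mem_graph ⟨_, h₂⟩, S.mem_graph ⟨u, h₃⟩,
      S†.mem_graph ⟨_, h₄⟩, h⟩
  · simp only [IsNeumannSolution, LinearPMap.mem_graph_iff']
    rintro ⟨_, _, _, _, ⟨⟨_, h₁⟩, ⟨⟩⟩, ⟨⟨_, h₂⟩, ⟨⟩⟩, ⟨⟨_, h₃⟩, ⟨⟩⟩, ⟨⟨_, h₄⟩, ⟨⟩⟩, h⟩
    exact ⟨h₁, h₂, h₃, h₄, h⟩

/-- Let `T : H₁ → H₂` and `S : H₂ → H₃` be densely defined closed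
operators with `range T = ker S` (as subspaces of `H₂`) and `range S` closed in `H₃`.
Then there is a constant `c > 0` such that every `f ∈ H₂` admits a unique
`u ∈ H₂` with `u ∈ dom T*`, `T* u ∈ dom T`, `u ∈ dom S`, `S u ∈ dom S*` and
`T (T* u) + S* (S u) = f`; moreover `‖u‖ ≤ c * ‖f‖`. -/
theorem exists_unique_neumann_solution
    {H₁ H₂ H₃ : Type*}
    [NormedAddCommGroup H₁] [InnerProductSpace ℂ H₁] [CompleteSpace H₁]
    [NormedAddCommGroup H₂] [InnerProductSpace ℂ H₂] [CompleteSpace H₂]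
    [NormedAddCommGroup H₃] [InnerProductSpace ℂ H₃] [CompleteSpace H₃]
    (T : H₁ →ₗ.[ℂ] H₂) (S : H₂ →ₗ.[ℂ] H₃)
    (hTdense : Dense (T.domain : Set H₁)) (hTclosed : T.IsClosed)
    (hSdense : Dense (S.domain : Set H₂)) (hSclosed : S.IsClosed)
    (hrange : LinearMap.range T.toFun = (LinearMap.ker S.toFun).map S.domain.subtype)
    (hSrange : IsClosed (LinearMap.range S.toFun : Set H₃)) :
    ∃ c > 0, ∀ f : H₂,
      ∃ u : H₂, SolvesNeumannProblem T S f u ∧ ‖u‖ ≤ c * ‖f‖ ∧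
        ∀ u' : H₂, SolvesNeumannProblem T S f u' → u' = u := by
  obtain ⟨N, hN⟩ := exists_unique_neumann_solution_general hTdense hTclosed hSdense hSclosed
    hrange hSrange.isComplete
  simp only [solvesNeumannProblem_iff, hN]
  exact ⟨‖N‖ + 1, by positivity, fun f ↦ ⟨N f, rfl,
    (N.le_opNorm f).trans (by gcongr; exact le_add_of_nonneg_right zero_le_one), fun _ h ↦ h⟩⟩
end

section
/- Let s be a positive integer and λ > 0. Let v : ℝ → ℂ be a smooth function that is bounded on [0, ∞), satisfies L_λ^s v = 0 on [0, ∞) where L_λ w := λ² w − w'', and satisfies the boundary conditions B_{s,ℓ} v(0) = 0 for all ℓ = 0, 1, …, s−1, where B_{s,ℓ} v := ∑_{k=0}^{s−1−ℓ} (−1)^k binom(s, ℓ+k+1) λ^{2(s−1−ℓ−k)} v^{(ℓ+2k+1)}. Then ∑_{j=0}^{s} binom(s, j) λ^{2(s−j)} ∫_0^∞ |v^{(j)}(x)|² dx = 0. -/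
/-- The ordinary differential operator `L_λ w := λ² w - w''`. -/
noncomputable def Llam (lam : ℝ) (w : ℝ → ℂ) : ℝ → ℂ :=
  fun x => (lam : ℂ) ^ 2 * w x - iteratedDeriv 2 w x

/-- The boundary operator
`B_{s,ℓ} v := ∑_{k=0}^{s-1-ℓ} (-1)^k C(s, ℓ+k+1) λ^{2(s-1-ℓ-k)} v^{(ℓ+2k+1)}`. -/
noncomputable def Bop (lam : ℝ) (s ℓ : ℕ) (v : ℝ → ℂ) : ℝ → ℂ :=
  fun x => ∑ k ∈ Finset.range (s - 1 - ℓ + 1),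
    (-1 : ℂ) ^ k * (s.choose (ℓ + k + 1) : ℂ) * (lam : ℂ) ^ (2 * (s - 1 - ℓ - k)) *
      iteratedDeriv (ℓ + 2 * k + 1) v x

/-!
Pairing `L_λ^s v` with `v` and integrating by parts `j` times in the term `(-1)^j v^{(2j)}` gives
`∑_j C(s,j) λ^{2(s-j)} ∫ |v^{(j)}|² = ∫ ⟪v, L_λ^s v⟫ - ∑_ℓ ⟪v^{(ℓ)}(0), B_{s,ℓ} v(0)⟫`,
and both terms on the right vanish. The boundary terms at infinity and the convergence of the
integrals are controlled because `v` solves a linear equation with constant coefficients: on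
`[0, ∞)` it equals `P(x) e^{λx} + Q(x) e^{-λx}`, and growth slower than `e^{λx}` forces `P = 0`, so
all derivatives of `v` decay exponentially.
-/

open Filter Topology Asymptotics MeasureTheory Polynomial
open scoped InnerProductSpace

section EvenOperatorTail

variable {E : Type*} [NormedAddCommGroup E] [NormedSpace ℝ E]

theorem hasDerivAt_iteratedDeriv {N j : ℕ} {v : ℝ → E}
    (hv : ContDiff ℝ N v) (hj : j < N) (x : ℝ) :
    HasDerivAt (iteratedDeriv j v) (iteratedDeriv (j + 1) v x) x := by
  rw [iteratedDeriv_succ]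
  exact (hv.differentiable_iteratedDeriv j (mod_cast hj) x).hasDerivAt

theorem contDiff_iteratedDeriv {n j : ℕ} {v : ℝ → E} (hv : ContDiff ℝ (n + j : ℕ) v) :
    ContDiff ℝ n (iteratedDeriv j v) := by
  rw [iteratedDeriv_eq_iterate]
  exact hv.iterate_deriv' n j

/-- The `m`-th tail `∑_{k ≤ n - m} (-1)^k a_{m+k} v^{(m+2k)}` of the even-order operator
`∑_{k ≤ n} (-1)^k a_k v^{(2k)}`, which is the tail for `m = 0`. For `m ≥ 1` the tail is the
coefficient of `v^{(m-1)}` in the boundary terms of Green's formula. -/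
noncomputable def evenOperatorTail (a : ℕ → ℝ) (n m : ℕ) (v : ℝ → E) (x : ℝ) : E :=
  ∑ k ∈ Finset.range (n + 1 - m), ((-1) ^ k * a (m + k)) • iteratedDeriv (m + 2 * k) v x

theorem evenOperatorTail_self (a : ℕ → ℝ) (n : ℕ) (v : ℝ → E) (x : ℝ) :
    evenOperatorTail a n n v x = a n • iteratedDeriv n v x := by
  simp [evenOperatorTail]

theorem hasDerivAt_evenOperatorTail_succ (a : ℕ → ℝ) {n m : ℕ} {v : ℝ → E}
    (hv : ContDiff ℝ (2 * n : ℕ) v) (hm : m < n) (x : ℝ) :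
    HasDerivAt (evenOperatorTail a n (m + 1) v)
      (a m • iteratedDeriv m v x - evenOperatorTail a n m v x) x := by
  have hterms : HasDerivAt (evenOperatorTail a n (m + 1) v)
      (∑ k ∈ Finset.range (n + 1 - (m + 1)),
        ((-1) ^ k * a (m + 1 + k)) • iteratedDeriv (m + 1 + 2 * k + 1) v x) x :=
    HasDerivAt.fun_sum fun k hk ↦
      (hasDerivAt_iteratedDeriv hv (by have := Finset.mem_range.1 hk; lia) x).const_smul _
  convert hterms using 1
  rw [evenOperatorTail, show n + 1 - m = n + 1 - (m + 1) + 1 by lia, Finset.sum_range_succ']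
  simp only [pow_zero, one_mul, add_zero, mul_zero, sub_add_cancel_right, ← Finset.sum_neg_distrib]
  refine Finset.sum_congr rfl fun k _ ↦ ?_
  rw [← neg_smul, pow_succ, show m + (k + 1) = m + 1 + k by ring,
    show m + 2 * (k + 1) = m + 1 + 2 * k + 1 by ring]
  congr 1
  ring

theorem tendsto_evenOperatorTail_zero (a : ℕ → ℝ) {n m : ℕ} {v : ℝ → E} {l : Filter ℝ}
    (hv : ∀ j ≤ 2 * n - m, Tendsto (iteratedDeriv j v) l (𝓝 0)) :
    Tendsto (evenOperatorTail a n m v) l (𝓝 0) := by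
  have hsum := tendsto_finsetSum (Finset.range (n + 1 - m)) fun k hk ↦
    (hv (m + 2 * k) (by have := Finset.mem_range.1 hk; lia)).const_smul ((-1) ^ k * a (m + k))
  simp only [smul_zero, Finset.sum_const_zero] at hsum
  exact hsum

end EvenOperatorTail

section GreenFormula

variable {E : Type*} [NormedAddCommGroup E] [InnerProductSpace ℝ E]

/-- The boundary form `∑_{m < n} ⟪v^{(m)}, T_{m+1} v⟫` of Green's formula for the operator
`∑_{k ≤ n} (-1)^k a_k v^{(2k)}`, where `T_m` is its `m`-th tail. The real inner product is used,
so for `E = ℂ` only the real part of the usual sesquilinear form is recorded. -/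
noncomputable def boundaryForm (a : ℕ → ℝ) (n : ℕ) (v : ℝ → E) (x : ℝ) : ℝ :=
  ∑ m ∈ Finset.range n, ⟪iteratedDeriv m v x, evenOperatorTail a n (m + 1) v x⟫_ℝ

theorem hasDerivAt_boundaryForm (a : ℕ → ℝ) {n : ℕ} {v : ℝ → E}
    (hv : ContDiff ℝ (2 * n : ℕ) v) (x : ℝ) :
    HasDerivAt (boundaryForm a n v)
      (∑ j ∈ Finset.range (n + 1), a j * ‖iteratedDeriv j v x‖ ^ 2 -
        ⟪v x, evenOperatorTail a n 0 v x⟫_ℝ) x := by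
  let p (m : ℕ) : ℝ := ⟪iteratedDeriv m v x, evenOperatorTail a n m v x⟫_ℝ
  have hterm (m : ℕ) (hm : m < n) :
      HasDerivAt (fun y ↦ ⟪iteratedDeriv m v y, evenOperatorTail a n (m + 1) v y⟫_ℝ)
        (a m * ‖iteratedDeriv m v x‖ ^ 2 + (p (m + 1) - p m)) x := by
    refine ((hasDerivAt_iteratedDeriv hv (by lia : m < 2 * n) x).inner ℝ
      (hasDerivAt_evenOperatorTail_succ a hv hm x)).congr_deriv ?_
    rw [inner_sub_right, real_inner_smul_right, real_inner_self_eq_norm_sq]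
    ring
  have hlast : p n = a n * ‖iteratedDeriv n v x‖ ^ 2 := by
    simp only [p, evenOperatorTail_self, real_inner_smul_right, real_inner_self_eq_norm_sq]
  have htelescope : ∑ m ∈ Finset.range n, (a m * ‖iteratedDeriv m v x‖ ^ 2 + (p (m + 1) - p m)) =
      ∑ j ∈ Finset.range (n + 1), a j * ‖iteratedDeriv j v x‖ ^ 2 - p 0 := by
    rw [Finset.sum_add_distrib, Finset.sum_range_sub, hlast, Finset.sum_range_succ]
    ring
  have hsum := HasDerivAt.fun_sum fun m hm ↦ hterm m (Finset.mem_range.1 hm)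
  rw [htelescope] at hsum
  exact hsum

theorem tendsto_boundaryForm_zero (a : ℕ → ℝ) {n : ℕ} {v : ℝ → E} {l : Filter ℝ}
    (hv : ∀ j < 2 * n, Tendsto (iteratedDeriv j v) l (𝓝 0)) :
    Tendsto (boundaryForm a n v) l (𝓝 0) := by
  have hsum := tendsto_finsetSum (Finset.range n) fun m hm ↦
    have hm := Finset.mem_range.1 hm
    (hv m (by lia)).inner (𝕜 := ℝ)
      (tendsto_evenOperatorTail_zero a (n := n) (m := m + 1) fun j hj ↦ hv j (by lia))
  simp only [inner_zero_left, Finset.sum_const_zero] at hsum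
  exact hsum

theorem sum_mul_integral_norm_sq_iteratedDeriv (a : ℕ → ℝ) {n : ℕ} {v : ℝ → E} {c : ℝ}
    (hv : ContDiff ℝ (2 * n : ℕ) v)
    (hint : ∀ j ≤ n, IntegrableOn (fun x ↦ ‖iteratedDeriv j v x‖ ^ 2) (Set.Ioi c))
    (hint₀ : IntegrableOn (fun x ↦ ⟪v x, evenOperatorTail a n 0 v x⟫_ℝ) (Set.Ioi c))
    (hlim : Tendsto (boundaryForm a n v) atTop (𝓝 0)) :
    ∑ j ∈ Finset.range (n + 1), a j * ∫ x in Set.Ioi c, ‖iteratedDeriv j v x‖ ^ 2 =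
      (∫ x in Set.Ioi c, ⟪v x, evenOperatorTail a n 0 v x⟫_ℝ) - boundaryForm a n v c := by
  have hterm (j : ℕ) (hj : j ∈ Finset.range (n + 1)) :
      IntegrableOn (fun x ↦ a j * ‖iteratedDeriv j v x‖ ^ 2) (Set.Ioi c) :=
    (hint j (Finset.mem_range_succ_iff.1 hj)).const_mul _
  have hftc := integral_Ioi_of_hasDerivAt_of_tendsto' (a := c)
    (fun x _ ↦ hasDerivAt_boundaryForm a hv x) ((integrable_finsetSum _ hterm).sub hint₀) hlim
  rw [integral_sub (integrable_finsetSum _ hterm) hint₀, integral_finsetSum _ hterm] at hftc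
  simp only [integral_const_mul] at hftc
  linarith

end GreenFormula

section ExponentialPolynomial

/-- The exponential polynomial `x ↦ P(x) e^{cx}` with a single exponent, on the real line. -/
noncomputable def expPoly (P : ℂ[X]) (c : ℂ) (x : ℝ) : ℂ :=
  P.eval (x : ℂ) * Complex.exp (c * x)

theorem norm_expPoly (P : ℂ[X]) (c : ℂ) (x : ℝ) :
    ‖expPoly P c x‖ = ‖P.eval (x : ℂ)‖ * Real.exp (c.re * x) := by
  simp [expPoly, Complex.norm_exp]

theorem hasDerivAt_expPoly (P : ℂ[X]) (c : ℂ) (x : ℝ) :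
    HasDerivAt (expPoly P c) (expPoly (derivative P + C c * P) c x) x := by
  have h := ((P.hasDerivAt (x : ℂ)).mul
    (((hasDerivAt_id (x : ℂ)).const_mul c).cexp)).comp_ofReal
  refine h.congr_deriv ?_
  simp only [expPoly, eval_add, eval_mul, eval_C, id]
  ring

theorem exists_iteratedDeriv_expPoly (P : ℂ[X]) (c : ℂ) (j : ℕ) :
    ∃ R : ℂ[X], iteratedDeriv j (expPoly P c) = expPoly R c := by
  induction j with
  | zero => exact ⟨P, iteratedDeriv_zero⟩
  | succ j ih =>
    obtain ⟨R, hR⟩ := ih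
    refine ⟨derivative R + C c * R, ?_⟩
    rw [iteratedDeriv_succ, hR]
    exact funext fun x ↦ (hasDerivAt_expPoly R c x).deriv

theorem isLittleO_eval_exp_mul (P : ℂ[X]) {b : ℝ} (hb : 0 < b) :
    (fun x : ℝ ↦ P.eval (x : ℂ)) =o[atTop] fun x ↦ Real.exp (b * x) := by
  induction P using Polynomial.induction_on' with
  | add p q hp hq => simpa only [eval_add] using hp.add hq
  | monomial k a =>
    have hpow : (fun x : ℝ ↦ (x : ℂ) ^ k) =o[atTop] fun x ↦ Real.exp (b * x) :=
      ((isLittleO_pow_exp_pos_mul_atTop k hb).norm_left.congr_left (by simp)).of_norm_left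
    simpa only [eval_monomial] using hpow.const_mul_left a

theorem isLittleO_expPoly (P : ℂ[X]) {c : ℂ} {b : ℝ} (hb : c.re < b) :
    expPoly P c =o[atTop] fun x ↦ Real.exp (b * x) := by
  have h := (isLittleO_eval_exp_mul P (sub_pos.2 hb)).norm_left.mul_isBigO
    (isBigO_refl (fun x : ℝ ↦ Real.exp (c.re * x)) atTop)
  refine (h.congr (fun x ↦ (norm_expPoly P c x).symm) fun x ↦ ?_).of_norm_left
  rw [← Real.exp_add, ← add_mul, sub_add_cancel]

theorem eq_zero_of_tendsto_eval {P : ℂ[X]}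
    (h : Tendsto (fun x : ℝ ↦ P.eval (x : ℂ)) atTop (𝓝 0)) : P = 0 := by
  have hnorm : Tendsto (fun x : ℝ ↦ ‖(x : ℂ)‖) atTop atTop := by
    simpa using tendsto_abs_atTop_atTop
  have hconst : P = C (P.coeff 0) := eq_C_of_degree_le_zero <| not_lt.1 fun hdeg ↦
    not_tendsto_nhds_of_tendsto_atTop (P.tendsto_norm_atTop hdeg hnorm) _ h.norm
  rw [hconst] at h ⊢
  simp only [eval_C] at h
  rw [tendsto_nhds_unique tendsto_const_nhds h, C_0]

theorem eq_zero_of_expPoly_isLittleO {P : ℂ[X]} {c : ℂ}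
    (h : expPoly P c =o[atTop] fun x ↦ Real.exp (c.re * x)) : P = 0 := by
  refine eq_zero_of_tendsto_eval (tendsto_zero_iff_norm_tendsto_zero.2 ?_)
  refine h.norm_left.tendsto_div_nhds_zero.congr fun x ↦ ?_
  rw [norm_expPoly, mul_div_cancel_right₀ _ (Real.exp_ne_zero _)]

theorem exists_derivative_add_C_mul_eq (c : ℂ) (P : ℂ[X]) :
    ∃ R : ℂ[X], derivative R + C c * R = P := by
  induction P using Polynomial.induction_on' with
  | add p q hp hq =>
    obtain ⟨R, rfl⟩ := hp
    obtain ⟨S, rfl⟩ := hq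
    exact ⟨R + S, by rw [derivative_add]; ring⟩
  | monomial n a =>
    rcases eq_or_ne c 0 with rfl | hc
    · have hn : (n : ℂ) + 1 ≠ 0 := n.cast_add_one_ne_zero
      exact ⟨monomial (n + 1) (a / (n + 1)), by simp [hn]⟩
    induction n generalizing a with
    | zero => exact ⟨C (a / c), by rw [derivative_C, ← C_mul, mul_div_cancel₀ _ hc]; simp⟩
    | succ n ih =>
      obtain ⟨R, hR⟩ := ih (a / c * (n + 1 : ℕ))
      refine ⟨monomial (n + 1) (a / c) - R, ?_⟩
      rw [derivative_sub, derivative_monomial, mul_sub, C_mul_monomial, mul_div_cancel₀ _ hc,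
        Nat.add_sub_cancel, ← hR]
      ring

theorem isLittleO_iteratedDeriv_of_eqOn_expPoly {f : ℝ → ℂ} {Q : ℂ[X]} {c : ℂ} {b x₀ : ℝ}
    (hb : c.re < b) (hf : Set.EqOn f (expPoly Q c) (Set.Ioi x₀)) (j : ℕ) :
    iteratedDeriv j f =o[atTop] fun x ↦ Real.exp (b * x) := by
  obtain ⟨R, hR⟩ := exists_iteratedDeriv_expPoly Q c j
  refine (isLittleO_expPoly R hb).congr' ?_ .rfl
  filter_upwards [eventually_gt_atTop x₀] with x hx
  rw [← hR, hf.iteratedDeriv_of_isOpen isOpen_Ioi j hx]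

/-- `f` is an exponential polynomial `∑_{c ∈ S} P_c(x) e^{cx}` with exponents in `S` on the
half-line `[0, ∞)`; nothing is required of `f` on the negative axis. -/
def IsExpPoly (S : Finset ℂ) (f : ℝ → ℂ) : Prop :=
  ∃ P : ℂ → ℂ[X], ∀ x : ℝ, 0 ≤ x → f x = ∑ c ∈ S, expPoly (P c) c x

theorem eq_mul_exp_of_hasDerivAt_const_mul {f : ℝ → ℂ} {c : ℂ}
    (hf : ∀ x, 0 ≤ x → HasDerivAt f (c * f x) x) {x : ℝ} (hx : 0 ≤ x) :
    f x = f 0 * Complex.exp (c * x) := by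
  let g (y : ℝ) : ℂ := f y * Complex.exp (-c * y)
  have hexp (y : ℝ) :
      HasDerivAt (fun y : ℝ ↦ Complex.exp (-c * y)) (-c * Complex.exp (-c * y)) y := by
    simpa [Function.comp_def] using
      ((hasDerivAt_id (y : ℂ)).const_mul (-c)).cexp.comp_ofReal.congr_deriv (mul_comm _ _)
  have hg (y : ℝ) (hy : 0 ≤ y) : HasDerivAt g 0 y :=
    ((hf y hy).mul (hexp y)).congr_deriv (by ring)
  have hg_const : g x = g 0 :=
    constant_of_has_deriv_right_zero (fun y hy ↦ (hg y hy.1).continuousAt.continuousWithinAt)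
      (fun y hy ↦ (hg y hy.1).hasDerivWithinAt) x ⟨hx, le_rfl⟩
  calc f x = g x * Complex.exp (c * x) := by
        rw [mul_assoc, ← Complex.exp_add, neg_mul, neg_add_cancel, Complex.exp_zero, mul_one]
    _ = f 0 * Complex.exp (c * x) := by rw [hg_const]; simp [g]

theorem IsExpPoly.add_const_mul_exp {S : Finset ℂ} {f : ℝ → ℂ} (hf : IsExpPoly S f) {c : ℂ}
    (hc : c ∈ S) (K : ℂ) : IsExpPoly S fun x ↦ f x + K * Complex.exp (c * x) := by
  obtain ⟨P, hP⟩ := hf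
  refine ⟨fun d ↦ P d + if d = c then C K else 0, fun x hx ↦ ?_⟩
  have hsplit (d : ℂ) : expPoly (P d + if d = c then C K else 0) d x =
      expPoly (P d) d x + if d = c then K * Complex.exp (c * x) else 0 := by
    split_ifs with hdc <;> simp [expPoly, add_mul, hdc]
  beta_reduce
  rw [hP x hx, Finset.sum_congr rfl fun d _ ↦ hsplit d, Finset.sum_add_distrib,
    Finset.sum_ite_eq' S c, if_pos hc]

theorem IsExpPoly.exists_hasDerivAt {S : Finset ℂ} {h : ℝ → ℂ} (hh : IsExpPoly S h) (c : ℂ) :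
    ∃ u : ℝ → ℂ, IsExpPoly S u ∧ ∀ x, 0 ≤ x → HasDerivAt u (c * u x + h x) x := by
  obtain ⟨P, hP⟩ := hh
  choose R hR using fun d ↦ exists_derivative_add_C_mul_eq (d - c) (P d)
  refine ⟨fun x ↦ ∑ d ∈ S, expPoly (R d) d x, ⟨R, fun _ _ ↦ rfl⟩, fun x hx ↦ ?_⟩
  refine (HasDerivAt.fun_sum fun d _ ↦ hasDerivAt_expPoly (R d) d x).congr_deriv ?_
  rw [hP x hx, Finset.mul_sum, ← Finset.sum_add_distrib]
  refine Finset.sum_congr rfl fun d _ ↦ ?_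
  simp only [← hR, expPoly, eval_add, eval_mul, eval_C]
  ring

theorem IsExpPoly.of_deriv_sub_mul {S : Finset ℂ} {c : ℂ} (hc : c ∈ S) {f f' : ℝ → ℂ}
    (hf : ∀ x, 0 ≤ x → HasDerivAt f (f' x) x) (h : IsExpPoly S fun x ↦ f' x - c * f x) :
    IsExpPoly S f := by
  obtain ⟨u, hu_exp, hu⟩ := h.exists_hasDerivAt c
  have hhom (x : ℝ) (hx : 0 ≤ x) :
      HasDerivAt (fun y ↦ f y - u y) (c * (f x - u x)) x :=
    ((hf x hx).fun_sub (hu x hx)).congr_deriv (by ring)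
  obtain ⟨P, hP⟩ := hu_exp.add_const_mul_exp hc (f 0 - u 0)
  refine ⟨P, fun x hx ↦ ?_⟩
  have hdiff : f x - u x = (f 0 - u 0) * Complex.exp (c * x) :=
    eq_mul_exp_of_hasDerivAt_const_mul hhom hx
  simpa only [← hdiff, add_sub_cancel] using hP x hx

theorem IsExpPoly.exists_eqOn_expPoly {f : ℝ → ℂ} {a b : ℂ} (hf : IsExpPoly {a, b} f)
    (hab : b.re < a.re) (hgrowth : f =o[atTop] fun x ↦ Real.exp (a.re * x)) :
    ∃ Q : ℂ[X], Set.EqOn f (expPoly Q b) (Set.Ici 0) := by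
  obtain ⟨P, hP⟩ := hf
  have hne : a ≠ b := fun h ↦ hab.ne' (congrArg Complex.re h)
  simp only [Finset.sum_pair hne] at hP
  have hlead : expPoly (P a) a =o[atTop] fun x ↦ Real.exp (a.re * x) := by
    refine (hgrowth.sub (isLittleO_expPoly (P b) hab)).congr' ?_ .rfl
    filter_upwards [eventually_ge_atTop 0] with x hx
    rw [hP x hx, add_sub_cancel_right]
  have hzero : P a = 0 := eq_zero_of_expPoly_isLittleO hlead
  exact ⟨P b, fun x hx ↦ by simpa [hzero, expPoly] using hP x hx⟩

end ExponentialPolynomial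

section ExponentialBounds

variable {E : Type*} [NormedAddCommGroup E] {f : ℝ → E} {b : ℝ}

theorem integrableOn_norm_sq_of_isBigO_exp_neg {c : ℝ} (hf : ContinuousOn f (Set.Ici c))
    (hb : 0 < b) (hdecay : f =O[atTop] fun x ↦ Real.exp (-b * x)) :
    IntegrableOn (fun x ↦ ‖f x‖ ^ 2) (Set.Ioi c) := by
  refine integrable_of_isBigO_exp_neg (b := 2 * b) (by positivity) (hf.norm.pow 2) ?_
  refine (hdecay.norm_left.pow 2).congr_right fun x ↦ ?_
  rw [← Real.exp_nat_mul]
  congr 1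
  push_cast
  ring

theorem isLittleO_exp_mul_of_bounded (hb : 0 < b)
    (hbdd : ∃ M : ℝ, ∀ x : ℝ, 0 ≤ x → ‖f x‖ ≤ M) :
    f =o[atTop] fun x ↦ Real.exp (b * x) := by
  obtain ⟨M, hM⟩ := hbdd
  have hone : f =O[atTop] fun _ ↦ (1 : ℝ) :=
    .of_bound M <| (eventually_ge_atTop 0).mono fun x hx ↦ by simpa using hM x hx
  refine hone.trans_isLittleO ((isLittleO_one_left_iff ℝ).2 ?_)
  simpa only [Real.norm_eq_abs, Real.abs_exp] using!
    Real.tendsto_exp_atTop.comp (tendsto_id.const_mul_atTop hb)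

end ExponentialBounds

section Llam

variable {lam : ℝ} {s : ℕ} {v : ℝ → ℂ}

theorem contDiff_llam {n : ℕ} (hv : ContDiff ℝ (n + 2 : ℕ) v) : ContDiff ℝ n (Llam lam v) :=
  (contDiff_const.mul (hv.of_le (mod_cast Nat.le_add_right n 2))).sub
    (contDiff_iteratedDeriv hv)

theorem iteratedDeriv_llam {n : ℕ} (hv : ContDiff ℝ (n + 2 : ℕ) v) (x : ℝ) :
    iteratedDeriv n (Llam lam v) x =
      (lam : ℂ) ^ 2 * iteratedDeriv n v x - iteratedDeriv (n + 2) v x := by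
  have hv₀ : ContDiff ℝ n v := hv.of_le (mod_cast Nat.le_add_right n 2)
  have hv₂ : ContDiff ℝ n (iteratedDeriv 2 v) := contDiff_iteratedDeriv hv
  have hcomp : iteratedDeriv n (iteratedDeriv 2 v) = iteratedDeriv (n + 2) v := by
    simp only [iteratedDeriv_eq_iterate, Function.iterate_add_apply]
  unfold Llam
  rw [iteratedDeriv_fun_sub (contDiff_const.mul hv₀).contDiffAt hv₂.contDiffAt,
    iteratedDeriv_const_mul_field, hcomp]

theorem iterate_llam_apply (hv : ContDiff ℝ (2 * s : ℕ) v) (x : ℝ) :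
    (Llam lam)^[s] v x = ∑ k ∈ Finset.range (s + 1),
      (s.choose k : ℂ) * ((-1) ^ k * (lam : ℂ) ^ (2 * (s - k)) * iteratedDeriv (2 * k) v x) := by
  induction s generalizing v with
  | zero => simp
  | succ s ih =>
    rw [Function.iterate_succ_apply, ih (contDiff_llam hv),
      Finset.sum_choose_succ_mul
        fun k i ↦ (-1) ^ k * (lam : ℂ) ^ (2 * i) * iteratedDeriv (2 * k) v x,
      ← Finset.sum_add_distrib]
    refine Finset.sum_congr rfl fun k hk ↦ ?_
    have hks : k ≤ s := Finset.mem_range_succ_iff.1 hk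
    rw [iteratedDeriv_llam (hv.of_le (mod_cast by lia)), Nat.sub_add_comm hks, mul_add_one 2 k]
    ring

theorem isExpPoly_of_iterate_llam_eq_zero (hv : ContDiff ℝ (2 * s : ℕ) v)
    (hode : ∀ x : ℝ, 0 ≤ x → (Llam lam)^[s] v x = 0) :
    IsExpPoly {(lam : ℂ), -(lam : ℂ)} v := by
  induction s generalizing v with
  | zero => exact ⟨0, fun x hx ↦ by simpa [expPoly] using hode x hx⟩
  | succ s ih =>
    obtain ⟨P, hP⟩ := ih (contDiff_llam hv) hode
    have hderiv (x : ℝ) : HasDerivAt v (iteratedDeriv 1 v x) x := by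
      simpa using hasDerivAt_iteratedDeriv hv (j := 0) (by lia) x
    have hderiv₂ (x : ℝ) : HasDerivAt (iteratedDeriv 1 v) (iteratedDeriv 2 v x) x :=
      hasDerivAt_iteratedDeriv hv (by lia) x
    -- `L_λ = -(D + λ)(D - λ)`
    refine IsExpPoly.of_deriv_sub_mul (c := lam) (by simp) (fun x _ ↦ hderiv x) ?_
    refine IsExpPoly.of_deriv_sub_mul (c := -lam) (by simp)
      (fun x _ ↦ (hderiv₂ x).sub ((hderiv x).const_mul (lam : ℂ))) ?_
    refine ⟨-P, fun x hx ↦ ?_⟩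
    have hLx := hP x hx
    simp only [Llam] at hLx
    simp only [expPoly, Pi.neg_apply, eval_neg, neg_mul, Finset.sum_neg_distrib] at hLx ⊢
    rw [← hLx]
    ring

/-- The coefficients `C(s,j) λ^{2(s-j)}` of `(λ² - D²)^s`, the sign `(-1)^j` being part of
`evenOperatorTail`. -/
def llamCoeff (lam : ℝ) (s j : ℕ) : ℝ :=
  s.choose j * lam ^ (2 * (s - j))

theorem evenOperatorTail_llamCoeff_zero_eq_iterate_llam (hv : ContDiff ℝ (2 * s : ℕ) v) (x : ℝ) :
    evenOperatorTail (llamCoeff lam s) s 0 v x = (Llam lam)^[s] v x := by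
  rw [iterate_llam_apply hv, evenOperatorTail]
  refine Finset.sum_congr rfl fun k _ ↦ ?_
  simp only [llamCoeff, zero_add, Complex.real_smul]
  push_cast
  ring

theorem evenOperatorTail_llamCoeff_succ_eq_bop {ℓ : ℕ} (hℓ : ℓ < s) (x : ℝ) :
    evenOperatorTail (llamCoeff lam s) s (ℓ + 1) v x = Bop lam s ℓ v x := by
  rw [evenOperatorTail, Bop, show s + 1 - (ℓ + 1) = s - 1 - ℓ + 1 by lia]
  refine Finset.sum_congr rfl fun k _ ↦ ?_
  simp only [llamCoeff, Complex.real_smul]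
  rw [show ℓ + 1 + k = ℓ + k + 1 by ring, show s - (ℓ + k + 1) = s - 1 - ℓ - k by lia,
    show ℓ + 1 + 2 * k = ℓ + 2 * k + 1 by ring]
  push_cast
  ring

theorem boundaryForm_llamCoeff_eq_zero {x : ℝ} (hbc : ∀ ℓ < s, Bop lam s ℓ v x = 0) :
    boundaryForm (llamCoeff lam s) s v x = 0 :=
  Finset.sum_eq_zero fun m hm ↦ by
    have hm := Finset.mem_range.1 hm
    rw [evenOperatorTail_llamCoeff_succ_eq_bop hm, hbc m hm, inner_zero_right]

end Llam

theorem sum_choose_mul_integral_eq_zero_general (s : ℕ) (lam : ℝ) (hlam : 0 < lam)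
    (v : ℝ → ℂ) (hv : ContDiff ℝ (2 * s : ℕ) v)
    (hgrowth : v =o[atTop] fun x ↦ Real.exp (lam * x))
    (hode : ∀ x : ℝ, 0 ≤ x → (Llam lam)^[s] v x = 0)
    (hbc : ∀ ℓ < s, Bop lam s ℓ v 0 = 0) :
    ∑ j ∈ Finset.range (s + 1),
      (s.choose j : ℝ) * lam ^ (2 * (s - j)) *
        ∫ x in Set.Ioi (0 : ℝ), ‖iteratedDeriv j v x‖ ^ 2 = 0 := by
  obtain ⟨Q, hQ⟩ :=
    (isExpPoly_of_iterate_llam_eq_zero hv hode).exists_eqOn_expPoly (by simpa using hlam) hgrowth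
  have hdecay : ∀ j, iteratedDeriv j v =o[atTop] fun x ↦ Real.exp (-(lam / 2) * x) :=
    isLittleO_iteratedDeriv_of_eqOn_expPoly (by simpa using half_lt_self hlam)
      (hQ.mono Set.Ioi_subset_Ici_self)
  have hlim (j : ℕ) : Tendsto (iteratedDeriv j v) atTop (𝓝 0) :=
    (hdecay j).trans_tendsto (Real.tendsto_exp_comp_nhds_zero.2
      (tendsto_id.const_mul_atTop_of_neg (by linarith)))
  have hint (j : ℕ) (hj : j ≤ s) : IntegrableOn (fun x ↦ ‖iteratedDeriv j v x‖ ^ 2) (Set.Ioi 0) :=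
    integrableOn_norm_sq_of_isBigO_exp_neg
      (hv.continuous_iteratedDeriv j (mod_cast by lia)).continuousOn (half_pos hlam)
      (hdecay j).isBigO
  have hpair : Set.EqOn (fun x ↦ ⟪v x, evenOperatorTail (llamCoeff lam s) s 0 v x⟫_ℝ) 0
      (Set.Ioi 0) := fun x hx ↦ by
    simp [evenOperatorTail_llamCoeff_zero_eq_iterate_llam hv, hode x (le_of_lt hx)]
  have hgreen := sum_mul_integral_norm_sq_iteratedDeriv (llamCoeff lam s) hv hint
    (integrableOn_zero.congr_fun hpair.symm measurableSet_Ioi)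
    (tendsto_boundaryForm_zero _ fun j _ ↦ hlim j)
  rw [setIntegral_congr_fun measurableSet_Ioi hpair, boundaryForm_llamCoeff_eq_zero hbc] at hgreen
  simpa [llamCoeff] using hgreen

/-- identity (20) of the paper with `f = v`. Let `s ≥ 1` and `λ > 0`.
If `v : ℝ → ℂ` is smooth, bounded on `[0, ∞)`, satisfies `L_λ^s v = 0` on `[0, ∞)` and
the boundary conditions `B_{s,ℓ} v (0) = 0` for `ℓ = 0, …, s-1`, then
`∑_{j=0}^{s} C(s,j) λ^{2(s-j)} ∫_0^∞ |v^{(j)}|² = 0`. -/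
theorem sum_choose_mul_integral_eq_zero (s : ℕ) (hs : 1 ≤ s) (lam : ℝ) (hlam : 0 < lam)
    (v : ℝ → ℂ) (hsmooth : ContDiff ℝ (⊤ : ℕ∞) v)
    (hbdd : ∃ M : ℝ, ∀ x : ℝ, 0 ≤ x → ‖v x‖ ≤ M)
    (hode : ∀ x : ℝ, 0 ≤ x → (Llam lam)^[s] v x = 0)
    (hbc : ∀ ℓ < s, Bop lam s ℓ v 0 = 0) :
    ∑ j ∈ Finset.range (s + 1),
      (s.choose j : ℝ) * lam ^ (2 * (s - j)) *
        ∫ x in Set.Ioi (0 : ℝ), ‖iteratedDeriv j v x‖ ^ 2 = 0 := by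
  exact sum_choose_mul_integral_eq_zero_general s lam hlam v
    (contDiff_infty.1 hsmooth _) (isLittleO_exp_mul_of_bounded hlam hbdd) hode hbc
end

section
/- Let Ω ⊆ ℝ^N be a bounded open set, let s be a positive integer, and let f, g be smooth complex-valued functions on an open neighborhood of the closure of Ω. Then ∑_{|α| ≤ s} γ_α ∫_Ω D^α f · conj(D^α g) = ∫_Ω f · conj(g) + ∑_{j=1}^{N} ∑_{|β| ≤ s−1} γ_β ∫_Ω D^β(∂f/∂x_j) · conj(D^β(∂g/∂x_j)), where γ_α := |α|!/α!. -/
open MeasureTheory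

/-- The partial derivative `∂f/∂x_j` of a function `f : ℝ^N → ℂ`. -/
noncomputable def pderivCoord {N : ℕ} (j : Fin N) (f : (Fin N → ℝ) → ℂ) :
    (Fin N → ℝ) → ℂ :=
  fun x => fderiv ℝ f x (Pi.single j 1)

/-- The multi-index derivative `D^α f = ∂^{α 0}_{x_0} ⋯ ∂^{α (N-1)}_{x_{N-1}} f`. -/
noncomputable def Dpow {N : ℕ} (α : Fin N → ℕ) (f : (Fin N → ℝ) → ℂ) :
    (Fin N → ℝ) → ℂ :=
  (List.finRange N).foldr (fun i g => (pderivCoord i)^[α i] g) f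

/-- The finset of multi-indices `α ∈ ℕ^N` with `|α| = ∑ i, α i ≤ s`. -/
def multiIdx (N s : ℕ) : Finset (Fin N → ℕ) :=
  (Fintype.piFinset fun _ : Fin N => Finset.range (s + 1)).filter fun α => ∑ i, α i ≤ s

/-!
Each integral on the left with `α ≠ 0` is split among the indices `j` with `α j ≠ 0` according to
Pascal's rule for multinomial coefficients, `γ_α = ∑_{j : α j ≠ 0} γ_{α - e_j}`. Writing
`α = β + e_j`, the piece belonging to `j` is `γ_β` times an integral over `D^{β + e_j} f` and
`D^{β + e_j} g`, and `D^{β + e_j} = D^β ∂_j` because partial derivatives commute.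
-/

open Filter Topology

section Multinomial

variable {ι : Type*} [DecidableEq ι]

lemma sub_single_one_add_single_one {α : ι → ℕ} {j : ι} (hj : α j ≠ 0) :
    α - Pi.single j 1 + Pi.single j 1 = α := by
  refine tsub_add_cancel_of_le fun i => ?_
  obtain rfl | hij := eq_or_ne i j
  · simpa [Nat.one_le_iff_ne_zero] using hj
  · simp [hij]

lemma sum_add_single_one {s : Finset ι} {j : ι} (hj : j ∈ s) (β : ι → ℕ) :
    ∑ i ∈ s, (β + Pi.single j 1 : ι → ℕ) i = ∑ i ∈ s, β i + 1 := by
  simp [Finset.sum_add_distrib, hj]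

lemma prod_factorial_add_single_one {s : Finset ι} {j : ι} (hj : j ∈ s) (β : ι → ℕ) :
    ∏ i ∈ s, ((β + Pi.single j 1 : ι → ℕ) i).factorial = (β j + 1) * ∏ i ∈ s, (β i).factorial := by
  have off_j : ∀ i ∈ s.erase j, ((β + Pi.single j 1 : ι → ℕ) i).factorial = (β i).factorial :=
    fun i hi => by simp [Finset.ne_of_mem_erase hi]
  rw [← Finset.mul_prod_erase s _ hj, ← Finset.mul_prod_erase s (fun i => (β i).factorial) hj,
    Finset.prod_congr rfl off_j]
  simp [Nat.factorial_succ, mul_assoc]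

lemma succ_mul_multinomial_add_single_one {s : Finset ι} {j : ι} (hj : j ∈ s) (β : ι → ℕ) :
    (β j + 1) * Nat.multinomial s (β + Pi.single j 1) =
      (∑ i ∈ s, β i + 1) * Nat.multinomial s β := by
  have prod_pos : 0 < ∏ i ∈ s, (β i).factorial :=
    Finset.prod_pos fun i _ => Nat.factorial_pos (β i)
  refine Nat.eq_of_mul_eq_mul_left prod_pos ?_
  calc (∏ i ∈ s, (β i).factorial) * ((β j + 1) * Nat.multinomial s (β + Pi.single j 1))
      = (∏ i ∈ s, ((β + Pi.single j 1 : ι → ℕ) i).factorial) *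
          Nat.multinomial s (β + Pi.single j 1) := by
        rw [prod_factorial_add_single_one hj]; ring
    _ = (∑ i ∈ s, β i + 1) * (∑ i ∈ s, β i).factorial := by
        rw [Nat.multinomial_spec, sum_add_single_one hj, Nat.factorial_succ]
    _ = (∏ i ∈ s, (β i).factorial) * ((∑ i ∈ s, β i + 1) * Nat.multinomial s β) := by
        rw [← Nat.multinomial_spec]; ring

lemma sum_mul_multinomial_sub_single_one {s : Finset ι} {j : ι} (hj : j ∈ s) {α : ι → ℕ}
    (hαj : α j ≠ 0) :
    (∑ i ∈ s, α i) * Nat.multinomial s (α - Pi.single j 1) = α j * Nat.multinomial s α := by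
  obtain ⟨β, rfl⟩ : ∃ β : ι → ℕ, α = β + Pi.single j 1 :=
    ⟨_, (sub_single_one_add_single_one hαj).symm⟩
  rw [sum_add_single_one hj, add_tsub_cancel_right, ← succ_mul_multinomial_add_single_one hj]
  simp

lemma multinomial_eq_sum_multinomial_sub_single_one {s : Finset ι} {α : ι → ℕ}
    (hα : ∑ i ∈ s, α i ≠ 0) :
    Nat.multinomial s α = ∑ j ∈ s with α j ≠ 0, Nat.multinomial s (α - Pi.single j 1) := by
  refine Nat.eq_of_mul_eq_mul_left (Nat.pos_of_ne_zero hα) ?_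
  calc (∑ j ∈ s, α j) * Nat.multinomial s α
      = ∑ j ∈ s with α j ≠ 0, α j * Nat.multinomial s α := by
        rw [← Finset.sum_mul, Finset.sum_filter_ne_zero]
    _ = ∑ j ∈ s with α j ≠ 0, (∑ i ∈ s, α i) * Nat.multinomial s (α - Pi.single j 1) :=
        Finset.sum_congr rfl fun j hj => by
          rw [Finset.mem_filter] at hj
          exact (sum_mul_multinomial_sub_single_one hj.1 hj.2).symm
    _ = (∑ i ∈ s, α i) * ∑ j ∈ s with α j ≠ 0, Nat.multinomial s (α - Pi.single j 1) :=
        (Finset.mul_sum ..).symm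

end Multinomial

section MultiIndex

variable {N : ℕ}

lemma mem_multiIdx {s : ℕ} {α : Fin N → ℕ} : α ∈ multiIdx N s ↔ ∑ i, α i ≤ s := by
  simp only [multiIdx, Finset.mem_filter, Fintype.mem_piFinset, Finset.mem_range,
    Order.lt_add_one_iff, and_iff_right_iff_imp]
  exact fun h i => (Finset.single_le_sum_of_canonicallyOrdered (Finset.mem_univ i)).trans h

lemma multiIdx_succ_filter_ne_zero (s : ℕ) (j : Fin N) :
    {α ∈ multiIdx N (s + 1) | α j ≠ 0} =
      (multiIdx N s).map (addRightEmbedding (Pi.single j 1)) := by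
  ext α
  simp only [Finset.mem_filter, Finset.mem_map, mem_multiIdx, addRightEmbedding_apply]
  constructor
  · rintro ⟨hα, hj⟩
    have cancel := sub_single_one_add_single_one hj
    rw [← cancel, sum_add_single_one (Finset.mem_univ j)] at hα
    exact ⟨_, Nat.le_of_succ_le_succ hα, cancel⟩
  · rintro ⟨β, hβ, rfl⟩
    rw [sum_add_single_one (Finset.mem_univ j)]
    exact ⟨Nat.succ_le_succ hβ, by simp⟩

lemma sum_multiIdx_succ_multinomial_nsmul {M : Type*} [AddCommMonoid M] (s : ℕ)
    (I : (Fin N → ℕ) → M) :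
    ∑ α ∈ multiIdx N (s + 1), Nat.multinomial Finset.univ α • I α =
      I 0 + ∑ j, ∑ β ∈ multiIdx N s,
        Nat.multinomial Finset.univ β • I (β + Pi.single j 1) := by
  have zero_mem : (0 : Fin N → ℕ) ∈ multiIdx N (s + 1) := by simp [mem_multiIdx]
  have pascal : ∀ α ∈ (multiIdx N (s + 1)).erase 0,
      Nat.multinomial Finset.univ α • I α =
        ∑ j with α j ≠ 0, Nat.multinomial Finset.univ (α - Pi.single j 1) • I α := by
    intro α hα
    have sum_ne_zero : ∑ i, α i ≠ 0 := by
      simpa [funext_iff] using Finset.ne_of_mem_erase hα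
    rw [multinomial_eq_sum_multinomial_sub_single_one sum_ne_zero, Finset.sum_nsmul_assoc]
  have swap : ∀ (α : Fin N → ℕ) (j : Fin N),
      α ∈ (multiIdx N (s + 1)).erase 0 ∧ j ∈ ({j | α j ≠ 0} : Finset (Fin N)) ↔
        α ∈ ({α ∈ multiIdx N (s + 1) | α j ≠ 0} : Finset _) ∧ j ∈ Finset.univ := by
    intro α j
    have ne_zero_of_apply : α j ≠ 0 → α ≠ 0 := fun hj h => hj (congrFun h j)
    simp only [Finset.mem_erase, Finset.mem_filter, Finset.mem_univ, true_and, and_true]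
    tauto
  rw [← Finset.add_sum_erase _ _ zero_mem, Finset.sum_congr rfl pascal, Finset.sum_comm' swap]
  congr 1
  · simp [Nat.multinomial]
  · simp only [multiIdx_succ_filter_ne_zero, Finset.sum_map, addRightEmbedding_apply,
      add_tsub_cancel_right]

end MultiIndex

section PartialDerivatives

variable {N : ℕ} {f g : (Fin N → ℝ) → ℂ} {x : Fin N → ℝ} {n : WithTop ℕ∞}

lemma pderivCoord_congr (j : Fin N) (h : f =ᶠ[𝓝 x] g) :
    pderivCoord j f =ᶠ[𝓝 x] pderivCoord j g :=
  h.fderiv.fun_comp (· (Pi.single j 1))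

lemma pderivCoord_iterate_congr (j : Fin N) (k : ℕ) (h : f =ᶠ[𝓝 x] g) :
    (pderivCoord j)^[k] f =ᶠ[𝓝 x] (pderivCoord j)^[k] g := by
  induction k with
  | zero => exact h
  | succ k ih =>
    simp only [Function.iterate_succ_apply']
    exact pderivCoord_congr j ih

lemma contDiffAt_pderivCoord (j : Fin N) (hf : ContDiffAt ℝ (n + 1) f x) :
    ContDiffAt ℝ n (pderivCoord j f) x :=
  (hf.fderiv_right le_rfl).clm_apply contDiffAt_const

lemma contDiffAt_pderivCoord_iterate (j : Fin N) (k : ℕ) (hf : ContDiffAt ℝ (n + k) f x) :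
    ContDiffAt ℝ n ((pderivCoord j)^[k] f) x := by
  induction k generalizing f with
  | zero => simpa using hf
  | succ k ih =>
    rw [Nat.cast_succ, ← add_assoc] at hf
    exact ih (contDiffAt_pderivCoord j hf)

lemma pderivCoord_pderivCoord (i j : Fin N) (hf : ContDiffAt ℝ 2 f x) :
    pderivCoord i (pderivCoord j f) x =
      fderiv ℝ (fderiv ℝ f) x (Pi.single i 1) (Pi.single j 1) := by
  have differentiableAt_fderiv : DifferentiableAt ℝ (fderiv ℝ f) x :=
    (hf.fderiv_right (m := 1) one_add_one_eq_two.le).differentiableAt one_ne_zero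
  unfold pderivCoord
  rw [fderiv_clm_apply differentiableAt_fderiv (differentiableAt_const _)]
  simp

lemma pderivCoord_comm (i j : Fin N) (hf : ContDiffAt ℝ 2 f x) :
    pderivCoord i (pderivCoord j f) =ᶠ[𝓝 x] pderivCoord j (pderivCoord i f) := by
  filter_upwards [hf.eventually (by simp)] with y hy
  rw [pderivCoord_pderivCoord i j hy, pderivCoord_pderivCoord j i hy]
  exact hy.isSymmSndFDerivAt (by simp) _ _

lemma pderivCoord_iterate_comm (i j : Fin N) (k : ℕ) (hf : ContDiffAt ℝ (k + 1) f x) :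
    (pderivCoord i)^[k] (pderivCoord j f) =ᶠ[𝓝 x] pderivCoord j ((pderivCoord i)^[k] f) := by
  induction k with
  | zero => rfl
  | succ k ih =>
    have iterate_contDiffAt : ContDiffAt ℝ 2 ((pderivCoord i)^[k] f) x :=
      contDiffAt_pderivCoord_iterate i k (hf.of_le (by norm_cast; lia))
    simp only [Function.iterate_succ_apply']
    exact (pderivCoord_congr i (ih (hf.of_le (by norm_cast; lia)))).trans
      (pderivCoord_comm i j iterate_contDiffAt)

/-- The part of the multi-index derivative `D^α` that differentiates only in the coordinates
listed in `l`, the head of the list being applied last. For `l = List.finRange N` it is `Dpow α`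
by definition; a general list makes induction on the coordinates possible. -/
noncomputable def DpowOn (l : List (Fin N)) (α : Fin N → ℕ) (f : (Fin N → ℝ) → ℂ) :
    (Fin N → ℝ) → ℂ :=
  l.foldr (fun i g => (pderivCoord i)^[α i] g) f

lemma DpowOn_cons (i : Fin N) (l : List (Fin N)) (α : Fin N → ℕ) (f : (Fin N → ℝ) → ℂ) :
    DpowOn (i :: l) α f = (pderivCoord i)^[α i] (DpowOn l α f) := rfl

lemma DpowOn_congr_index {l : List (Fin N)} {α β : Fin N → ℕ} (h : ∀ i ∈ l, α i = β i)
    (f : (Fin N → ℝ) → ℂ) : DpowOn l α f = DpowOn l β f :=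
  List.foldr_ext _ _ f fun i hi _ => by rw [h i hi]

lemma contDiffAt_DpowOn (l : List (Fin N)) (α : Fin N → ℕ)
    (hf : ContDiffAt ℝ (n + (l.map α).sum) f x) : ContDiffAt ℝ n (DpowOn l α f) x := by
  induction l generalizing n with
  | nil => simpa [DpowOn] using hf
  | cons i l ih =>
    rw [List.map_cons, List.sum_cons, Nat.cast_add, ← add_assoc] at hf
    exact contDiffAt_pderivCoord_iterate i (α i) (ih hf)

lemma DpowOn_pderivCoord (l : List (Fin N)) (α : Fin N → ℕ) (j : Fin N)
    (hf : ContDiffAt ℝ ((l.map α).sum + 1) f x) :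
    DpowOn l α (pderivCoord j f) =ᶠ[𝓝 x] pderivCoord j (DpowOn l α f) := by
  induction l with
  | nil => rfl
  | cons i l ih =>
    rw [List.map_cons, List.sum_cons] at hf
    have tail_contDiffAt : ContDiffAt ℝ (α i + 1) (DpowOn l α f) x :=
      contDiffAt_DpowOn l α (hf.of_le (by norm_cast; lia))
    exact (pderivCoord_iterate_congr i (α i) (ih (hf.of_le (by norm_cast; lia)))).trans
      (pderivCoord_iterate_comm i j (α i) tail_contDiffAt)

lemma DpowOn_add_single_one {l : List (Fin N)} (hl : l.Nodup) (α : Fin N → ℕ) {j : Fin N}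
    (hj : j ∈ l) (hf : ContDiffAt ℝ ((l.map α).sum + 1) f x) :
    DpowOn l (α + Pi.single j 1) f =ᶠ[𝓝 x] DpowOn l α (pderivCoord j f) := by
  induction l with
  | nil => simp at hj
  | cons i l ih =>
    rw [List.nodup_cons] at hl
    rw [List.map_cons, List.sum_cons] at hf
    have hf_tail : ContDiffAt ℝ ((l.map α).sum + 1) f x := hf.of_le (by norm_cast; lia)
    simp only [DpowOn_cons]
    obtain rfl | hji := eq_or_ne j i
    · have off_j : ∀ i ∈ l, (α + Pi.single j 1 : Fin N → ℕ) i = α i := fun i hi => by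
        simp [ne_of_mem_of_not_mem hi hl.1]
      rw [DpowOn_congr_index off_j, Pi.add_apply, Pi.single_eq_same, Function.iterate_succ_apply]
      exact pderivCoord_iterate_congr j (α j) (DpowOn_pderivCoord l α j hf_tail).symm
    · rw [Pi.add_apply, Pi.single_eq_of_ne hji.symm, add_zero]
      exact pderivCoord_iterate_congr i (α i)
        (ih hl.2 (List.mem_of_ne_of_mem hji hj) hf_tail)

lemma Dpow_add_single_one (α : Fin N → ℕ) (j : Fin N)
    (hf : ContDiffAt ℝ (∑ i, α i + 1 : ℕ) f x) :
    Dpow (α + Pi.single j 1) f =ᶠ[𝓝 x] Dpow α (pderivCoord j f) :=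
  DpowOn_add_single_one (List.nodup_finRange N) α (List.mem_finRange j)
    (by simpa [← Fin.sum_univ_def] using hf)

lemma Dpow_zero (f : (Fin N → ℝ) → ℂ) : Dpow 0 f = f :=
  List.foldr_fixed (List.finRange N)

end PartialDerivatives

theorem sobolev_inner_product_recursion_general {N : ℕ} (s : ℕ) (μ : Measure (Fin N → ℝ))
    {Ω : Set (Fin N → ℝ)} (hΩ : MeasurableSet Ω) {f g : (Fin N → ℝ) → ℂ}
    (hf : ∀ x ∈ Ω, ContDiffAt ℝ (s + 1) f x) (hg : ∀ x ∈ Ω, ContDiffAt ℝ (s + 1) g x) :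
    ∑ α ∈ multiIdx N (s + 1), (Nat.multinomial Finset.univ α : ℂ) *
        ∫ x in Ω, Dpow α f x * (starRingEnd ℂ) (Dpow α g x) ∂μ
      = (∫ x in Ω, f x * (starRingEnd ℂ) (g x) ∂μ) +
        ∑ j : Fin N, ∑ β ∈ multiIdx N s, (Nat.multinomial Finset.univ β : ℂ) *
          ∫ x in Ω, Dpow β (pderivCoord j f) x *
            (starRingEnd ℂ) (Dpow β (pderivCoord j g) x) ∂μ := by
  have Dpow_succ {h : (Fin N → ℝ) → ℂ} (hh : ∀ x ∈ Ω, ContDiffAt ℝ (s + 1) h x) (j : Fin N)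
      {β : Fin N → ℕ} (hβ : β ∈ multiIdx N s) {x : Fin N → ℝ} (hx : x ∈ Ω) :
      Dpow (β + Pi.single j 1) h x = Dpow β (pderivCoord j h) x :=
    (Dpow_add_single_one β j ((hh x hx).of_le
      (mod_cast Nat.succ_le_succ (mem_multiIdx.1 hβ)))).eq_of_nhds
  simp only [← nsmul_eq_mul]
  rw [sum_multiIdx_succ_multinomial_nsmul]
  simp only [Dpow_zero]
  congr 1
  refine Finset.sum_congr rfl fun j _ => Finset.sum_congr rfl fun β hβ => ?_
  congr 1
  refine setIntegral_congr_fun hΩ fun x hx => ?_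
  simp only [Dpow_succ hf j hβ hx, Dpow_succ hg j hβ hx]

/-- formula (5) of the paper. For `Ω ⊆ ℝ^N` bounded open, `s ≥ 1`,
and `f, g` smooth on an open neighborhood `U` of the closure of `Ω`,
`⟨f, g⟩_s = ⟨f, g⟩_0 + ∑_j ⟨D_j f, D_j g⟩_{s-1}` with the weights `γ_α = |α|!/α!`. -/
theorem sobolev_inner_product_recursion {N : ℕ} (s : ℕ) (hs : 1 ≤ s)
    (Ω U : Set (Fin N → ℝ)) (hΩopen : IsOpen Ω) (hΩbdd : Bornology.IsBounded Ω)
    (hUopen : IsOpen U) (hΩU : closure Ω ⊆ U)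
    (f g : (Fin N → ℝ) → ℂ) (hf : ContDiffOn ℝ (⊤ : ℕ∞) f U) (hg : ContDiffOn ℝ (⊤ : ℕ∞) g U) :
    ∑ α ∈ multiIdx N s, (Nat.multinomial Finset.univ α : ℂ) *
        ∫ x in Ω, Dpow α f x * (starRingEnd ℂ) (Dpow α g x)
      = (∫ x in Ω, f x * (starRingEnd ℂ) (g x)) +
        ∑ j : Fin N, ∑ β ∈ multiIdx N (s - 1), (Nat.multinomial Finset.univ β : ℂ) *
          ∫ x in Ω, Dpow β (pderivCoord j f) x *
            (starRingEnd ℂ) (Dpow β (pderivCoord j g) x) := by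
  obtain ⟨s, rfl⟩ := Nat.exists_eq_add_of_le' hs
  have contDiffAt_of_mem {h : (Fin N → ℝ) → ℂ} (hh : ContDiffOn ℝ (⊤ : ℕ∞) h U) (x) (hx : x ∈ Ω) :
      ContDiffAt ℝ (s + 1) h x :=
    (hh.contDiffAt (hUopen.mem_nhds (hΩU (subset_closure hx)))).of_le (mod_cast le_top)
  exact sobolev_inner_product_recursion_general s volume hΩopen.measurableSet
    (contDiffAt_of_mem hf) (contDiffAt_of_mem hg)
end

section
/- Let s be a positive integer. There exists a constant C > 0 such that for every ε ∈ (0, 1), the function u_ε(x) := x^{s−1}(x+ε)^{3/4} satisfies ∑_{j=0}^{s} ∫_0^1 |u_ε^{(j)}(x)|² dx ≤ C. -/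
/-!
The function `u_ε(x) = x ^ n * (x + ε) ^ α` is homogeneous of degree `n + α` in `(x, ε)`, and
`0 ≤ x ≤ x + ε`, so each term of Leibniz' rule for `u_ε^{(j)}(x)` is at most a constant times
`(x + ε) ^ (n + α - j)`, with a constant independent of `ε`. Translating by `ε`, the integral of
the square over `[0, b]` is therefore controlled by `∫ y in 0..b + ε, y ^ (2 * (n + α - j))`, which
is finite as soon as `j < n + α + 1 / 2`.
-/

open Finset intervalIntegral

theorem iteratedDeriv_add_rpow (k : ℕ) (ε α x : ℝ) :
    iteratedDeriv k (fun x : ℝ => (x + ε) ^ α) x =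
      (descPochhammer ℝ k).eval α * (x + ε) ^ (α - k) := by
  rw [iteratedDeriv_comp_add_const k (fun x : ℝ => x ^ α) ε, iteratedDeriv_eq_iterate]
  exact Real.iter_deriv_rpow_const _ _ _

theorem iteratedDeriv_pow_mul_add_rpow (n j : ℕ) (α : ℝ) {ε x : ℝ} (hxε : x + ε ≠ 0) :
    iteratedDeriv j (fun x : ℝ => x ^ n * (x + ε) ^ α) x =
      ∑ i ∈ range (j + 1), j.choose i * (n.descFactorial i * x ^ (n - i)) *
        ((descPochhammer ℝ (j - i)).eval α * (x + ε) ^ (α - (j - i : ℕ))) := by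
  have contDiffAt_pow : ContDiffAt ℝ j (fun x : ℝ => x ^ n) x := by fun_prop
  have contDiffAt_rpow : ContDiffAt ℝ j (fun x : ℝ => (x + ε) ^ α) x :=
    ContDiffAt.rpow_const_of_ne (by fun_prop) hxε
  simp only [iteratedDeriv_fun_mul contDiffAt_pow contDiffAt_rpow, iteratedDeriv_pow,
    iteratedDeriv_add_rpow]

/-- The sum of the absolute values of the coefficients in Leibniz' rule for the `j`-th derivative
of `x ^ n * (x + ε) ^ α`: the `ε`-independent factor in the bound of that derivative by a power of
`x + ε`. -/
noncomputable def leibnizConst (n : ℕ) (α : ℝ) (j : ℕ) : ℝ :=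
  ∑ i ∈ range (j + 1), j.choose i * n.descFactorial i * |(descPochhammer ℝ (j - i)).eval α|

section Bounds

variable {x ε : ℝ}

theorem pow_mul_add_rpow_le_add_rpow (hx : 0 ≤ x) (hε : 0 ≤ ε) (hxε : 0 < x + ε) (m : ℕ) (β : ℝ) :
    x ^ m * (x + ε) ^ β ≤ (x + ε) ^ (m + β) := by
  rw [Real.rpow_add hxε, Real.rpow_natCast]
  gcongr
  exact le_add_of_nonneg_right hε

theorem descFactorial_mul_pow_mul_add_rpow_le (hx : 0 ≤ x) (hε : 0 ≤ ε) (hxε : 0 < x + ε)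
    (n i : ℕ) (β : ℝ) :
    n.descFactorial i * (x ^ (n - i) * (x + ε) ^ β) ≤
      n.descFactorial i * (x + ε) ^ (n - i + β) := by
  rcases le_or_gt i n with hi | hi
  · rw [← Nat.cast_sub hi]
    gcongr
    exact pow_mul_add_rpow_le_add_rpow hx hε hxε (n - i) β
  · simp [Nat.descFactorial_of_lt hi]

theorem abs_iteratedDeriv_pow_mul_add_rpow_le (hx : 0 ≤ x) (hε : 0 ≤ ε) (hxε : 0 < x + ε)
    (n j : ℕ) (α : ℝ) :
    |iteratedDeriv j (fun x : ℝ => x ^ n * (x + ε) ^ α) x| ≤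
      leibnizConst n α j * (x + ε) ^ (n + α - j) := by
  rw [iteratedDeriv_pow_mul_add_rpow n j α hxε.ne', leibnizConst, sum_mul]
  refine (abs_sum_le_sum_abs _ _).trans (sum_le_sum fun i hi => ?_)
  set p : ℝ := |(descPochhammer ℝ (j - i)).eval α|
  have degree_eq : (n : ℝ) - i + (α - (j - i : ℕ)) = n + α - j := by
    rw [Nat.cast_sub (mem_range_succ_iff.mp hi)]
    ring
  calc
    _ = j.choose i * p *
          (n.descFactorial i * (x ^ (n - i) * (x + ε) ^ (α - (j - i : ℕ)))) := by
      simp only [abs_mul, Nat.abs_cast, abs_of_nonneg (pow_nonneg hx _),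
        abs_of_pos (Real.rpow_pos_of_pos hxε _)]
      ring
    _ ≤ j.choose i * p * (n.descFactorial i * (x + ε) ^ (n - i + (α - (j - i : ℕ)))) :=
      mul_le_mul_of_nonneg_left (descFactorial_mul_pow_mul_add_rpow_le hx hε hxε n i _)
        (by positivity)
    _ = _ := by
      rw [degree_eq]
      ring

end Bounds

section Integrals

variable {b ε : ℝ}

theorem intervalIntegrable_add_rpow {a r : ℝ} (hr : -1 < r) :
    IntervalIntegrable (fun x : ℝ => (x + ε) ^ r) MeasureTheory.volume a b :=
  (IntervalIntegrable.comp_add_right_iff (f := fun y : ℝ => y ^ r)).mpr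
    (intervalIntegrable_rpow' hr)

theorem integral_add_rpow_le (hε : 0 ≤ ε) {r : ℝ} (hr : -1 < r) :
    ∫ x in (0 : ℝ)..b, (x + ε) ^ r ≤ (b + ε) ^ (r + 1) / (r + 1) := by
  rw [integral_comp_add_right (fun y : ℝ => y ^ r), zero_add, integral_rpow (.inl hr)]
  have : 0 < r + 1 := by linarith
  gcongr
  exact sub_le_self _ (Real.rpow_nonneg hε _)

theorem integral_sq_iteratedDeriv_pow_mul_add_rpow_le (hb : 0 ≤ b) (hε : 0 ≤ ε) {n j : ℕ} {α : ℝ}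
    (hj : j < n + α + 1 / 2) :
    ∫ x in (0 : ℝ)..b, (iteratedDeriv j (fun x : ℝ => x ^ n * (x + ε) ^ α) x) ^ 2 ≤
      leibnizConst n α j ^ 2 *
        ((b + ε) ^ (2 * (n + α - j) + 1) / (2 * (n + α - j) + 1)) := by
  have hr : -1 < 2 * (n + α - j) := by linarith
  have sq_le : ∀ x ∈ Set.Ioc 0 b,
      ‖(iteratedDeriv j (fun x : ℝ => x ^ n * (x + ε) ^ α) x) ^ 2‖ ≤
        leibnizConst n α j ^ 2 * (x + ε) ^ (2 * (n + α - j)) := by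
    rintro x ⟨hx, -⟩
    have hxε : 0 < x + ε := by positivity
    calc
      _ = |iteratedDeriv j (fun x : ℝ => x ^ n * (x + ε) ^ α) x| ^ 2 := by
        rw [norm_pow, Real.norm_eq_abs]
      _ ≤ (leibnizConst n α j * (x + ε) ^ (n + α - j)) ^ 2 := by
        gcongr
        exact abs_iteratedDeriv_pow_mul_add_rpow_le hx.le hε hxε n j α
      _ = _ := by
        rw [mul_pow, ← Real.rpow_mul_natCast hxε.le, Nat.cast_ofNat, mul_comm (2 : ℝ)]
  calc
    _ ≤ ∫ x in (0 : ℝ)..b, leibnizConst n α j ^ 2 * (x + ε) ^ (2 * (n + α - j)) :=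
      (Real.le_norm_self _).trans <| norm_integral_le_of_norm_le hb (.of_forall sq_le)
        ((intervalIntegrable_add_rpow hr).const_mul _)
    _ ≤ _ := by
      rw [integral_const_mul]
      gcongr
      exact integral_add_rpow_le hε hr

end Integrals

theorem sum_integral_sq_iteratedDeriv_le_general {n s : ℕ} {α b R : ℝ}
    (hs : s < n + α + 1 / 2) (hb : 0 ≤ b) (hR : 0 ≤ R) :
    ∃ C > 0, ∀ ε ∈ Set.Icc 0 R,
      ∑ j ∈ range (s + 1),
        (∫ x in (0 : ℝ)..b, (iteratedDeriv j (fun x : ℝ => x ^ n * (x + ε) ^ α) x) ^ 2) ≤ C := by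
  have hj : ∀ j ∈ range (s + 1), (j : ℝ) < n + α + 1 / 2 := fun j hjs =>
    (Nat.cast_le.mpr (mem_range_succ_iff.mp hjs)).trans_lt hs
  have exponent_pos : ∀ j ∈ range (s + 1), 0 < 2 * (n + α - j) + 1 := fun j hjs => by
    linarith [hj j hjs]
  let K (j : ℕ) : ℝ :=
    leibnizConst n α j ^ 2 * ((b + R) ^ (2 * (n + α - j) + 1) / (2 * (n + α - j) + 1))
  have K_nonneg : ∀ j ∈ range (s + 1), 0 ≤ K j := fun j hjs => by
    have := exponent_pos j hjs
    positivity
  refine ⟨∑ j ∈ range (s + 1), K j + 1, by linarith [sum_nonneg K_nonneg], ?_⟩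
  rintro ε ⟨hε, hεR⟩
  refine (sum_le_sum fun j hjs => ?_).trans (le_add_of_nonneg_right zero_le_one)
  have := exponent_pos j hjs
  refine (integral_sq_iteratedDeriv_pow_mul_add_rpow_le hb hε (hj j hjs)).trans ?_
  simp only [K]
  gcongr

/-- Let `s ≥ 1`. There is a constant `C > 0` such that for every
`ε ∈ (0,1)`, the function `u_ε(x) := x^{s-1} (x+ε)^{3/4}` satisfies
`∑_{j=0}^{s} ∫_0^1 |u_ε^{(j)}(x)|² dx ≤ C`. -/
theorem sum_integral_sq_iteratedDeriv_le (s : ℕ) (hs : 1 ≤ s) :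
    ∃ C > 0, ∀ ε ∈ Set.Ioo (0 : ℝ) 1,
      ∑ j ∈ Finset.range (s + 1),
        (∫ x in (0 : ℝ)..1,
          (iteratedDeriv j (fun x : ℝ => x ^ (s - 1) * (x + ε) ^ ((3 : ℝ) / 4)) x) ^ 2)
        ≤ C := by
  have subcritical : (s : ℝ) < (s - 1 : ℕ) + 3 / 4 + 1 / 2 := by
    rw [Nat.cast_pred hs]
    linarith
  obtain ⟨C, hC, hle⟩ :=
    sum_integral_sq_iteratedDeriv_le_general subcritical zero_le_one zero_le_one
  exact ⟨C, hC, fun ε hε => hle ε (Set.Ioo_subset_Icc_self hε)⟩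
end
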